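/- arXiv:1507.06763 — 2 statements merged into one kernel-verified Lean document; each statement's English description precedes it below -/
import Mathlib

section
/- Let t ≥ 0 be an integer and let X be a database of size N in ℝ^d. For every database X_t of size N with H(X,X_t) = t and every database X_t' of size N with H(X_t,X_t') = 1, |q_count(X_t,k,r) − q_count(X_t',k,r)| ≤ sup_{x ∈ ℝ^d} max( C^{(t)}(X,x,k,r), C^{(t)}(X,x,k−1,r) ) + t + 1. (Upper bound on the t-step local sensitivity LS^{(t)} of the outlier-count query.) -/
open Finset
open scoped Classical

noncomputable section

/-- A point of `ℝ^d`. -/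
abbrev Pt (d : ℕ) := EuclideanSpace ℝ (Fin d)

/-- Hamming distance between two databases of size `N`: the number of differing records. -/
def hamming {N d : ℕ} (X X' : Fin N → Pt d) : ℕ :=
  (univ.filter fun i => X i ≠ X' i).card

/-- The degree of record `i` in `X`: the number of other records within distance `r`. -/
def deg {N d : ℕ} (X : Fin N → Pt d) (r : ℝ) (i : Fin N) : ℕ :=
  (univ.filter fun j => j ≠ i ∧ ‖X j - X i‖ ≤ r).card

/-- The number of outlier records: records with fewer than `k` neighbors within radius `r`. -/
def qCount {N d : ℕ} (X : Fin N → Pt d) (k : ℕ) (r : ℝ) : ℕ :=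
  (univ.filter fun i => deg X r i < k).card

/-- `V(X,m,r)`: the set of record indices of degree exactly `m` (empty for `m < 0`). -/
def Vset {N d : ℕ} (X : Fin N → Pt d) (r : ℝ) (m : ℤ) : Finset (Fin N) :=
  univ.filter fun i => (deg X r i : ℤ) = m

/-- `CV(X,x,m,r)`: the set of degree-`m` record indices within distance `r` of `x`
(empty for `m < 0`). -/
def CV {N d : ℕ} (X : Fin N → Pt d) (x : Pt d) (m : ℤ) (r : ℝ) : Finset (Fin N) :=
  (Vset X r m).filter fun i => ‖X i - x‖ ≤ r

/-- The union `⋃_{j ≥ 0, |j−m| ≤ t} CV(X,x,j,r)` (terms with `j < 0` are empty). -/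
def CVUnion {N d : ℕ} (X : Fin N → Pt d) (x : Pt d) (m : ℤ) (t : ℕ) (r : ℝ) :
    Finset (Fin N) :=
  (Finset.Icc (m - t) (m + t)).biUnion fun j => CV X x j r

/-- `C^{(t)}(X,x,m,r) = |⋃_{j ≥ 0, |j−m| ≤ t} CV(X,x,j,r)|`. -/
def Ct {N d : ℕ} (X : Fin N → Pt d) (x : Pt d) (m : ℤ) (t : ℕ) (r : ℝ) : ℕ :=
  (CVUnion X x m t r).card

theorem hamming_comm {N d : ℕ} (X Y : Fin N → Pt d) : hamming X Y = hamming Y X := by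
  simp only [hamming, ne_comm]

/-- The degree of an unchanged record grows by at most the number of changed records. -/
theorem deg_le_deg_add_hamming {N d : ℕ} (X Y : Fin N → Pt d) (r : ℝ) {i : Fin N}
    (hi : X i = Y i) : deg X r i ≤ deg Y r i + hamming X Y := by
  unfold deg hamming
  refine (card_le_card ?_).trans (card_union_le _ _)
  intro j hj
  simp only [mem_union, mem_filter, mem_univ, true_and] at hj ⊢
  by_cases h : X j = Y j
  · exact Or.inl ⟨hj.1, by rw [← h, ← hi]; exact hj.2⟩
  · exact Or.inr h

/-- If the degree of an unchanged record grows, some changed record has become its neighbor. -/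
theorem exists_changed_neighbor_of_deg_lt {N d : ℕ} {X Y : Fin N → Pt d} {r : ℝ} {i : Fin N}
    (hi : X i = Y i) (h : deg X r i < deg Y r i) :
    ∃ j, X j ≠ Y j ∧ ‖Y j - Y i‖ ≤ r := by
  by_contra! hc
  refine h.not_ge (card_le_card ?_)
  intro j hj
  simp only [mem_filter, mem_univ, true_and] at hj ⊢
  have hj' : X j = Y j := by
    by_contra hne
    exact (hc j hne).not_ge hj.2
  exact ⟨hj.1, by rw [hj', hi]; exact hj.2⟩

/-- Between databases at Hamming distance one, the unchanged records that stop being outliers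
pass from degree `k - 1` to degree `k` and lie within distance `r` of a common point. -/
theorem exists_center_of_hamming_eq_one {N d : ℕ} {Y Z : Fin N → Pt d} (k : ℕ) (r : ℝ)
    (h : hamming Y Z = 1) :
    ∃ x : Pt d, ∀ i, Y i = Z i → deg Y r i < k → k ≤ deg Z r i →
      (deg Y r i : ℤ) = k - 1 ∧ (deg Z r i : ℤ) = k ∧ ‖Z i - x‖ ≤ r := by
  obtain ⟨i₀, hi₀⟩ := card_eq_one.mp h
  refine ⟨Z i₀, fun i hi hY hZ => ?_⟩
  have hle := deg_le_deg_add_hamming Z Y r hi.symm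
  rw [hamming_comm, h] at hle
  obtain ⟨j, hj, hjr⟩ := exists_changed_neighbor_of_deg_lt hi (hY.trans_le hZ)
  have hj₀ : j = i₀ := by
    rw [← mem_singleton, ← hi₀]
    simpa using hj
  exact ⟨by omega, by omega, by rw [norm_sub_rev, ← hj₀]; exact hjr⟩

/-- A set of records whose members have degree `m` in `W` and lie within distance `r` of `x`,
up to exceptions in `E`, has at most `C^{(t)}(X,x,m,r) + t + |E|` elements, `t = H(X,W)`. -/
theorem card_le_Ct_add {N d : ℕ} {X W : Fin N → Pt d} {r : ℝ} {x : Pt d} {m : ℤ}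
    {S E : Finset (Fin N)}
    (hS : ∀ i ∈ S, i ∉ E → (deg W r i : ℤ) = m ∧ ‖W i - x‖ ≤ r) :
    S.card ≤ Ct X x m (hamming X W) r + hamming X W + E.card := by
  have hsub : S ⊆ (CVUnion X x m (hamming X W) r ∪ univ.filter fun i => X i ≠ W i) ∪ E := by
    intro i hi
    by_cases hE : i ∈ E
    · exact mem_union_right _ hE
    refine mem_union_left _ ?_
    by_cases hX : X i = W i
    · refine mem_union_left _ ?_
      obtain ⟨hm, hx⟩ := hS i hi hE
      have h₁ := deg_le_deg_add_hamming X W r hX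
      have h₂ := deg_le_deg_add_hamming W X r hX.symm
      rw [hamming_comm W X] at h₂
      simp only [CVUnion, CV, Vset, mem_biUnion, mem_Icc, mem_filter, mem_univ, true_and]
      exact ⟨deg X r i, ⟨by omega, by omega⟩, rfl, by rw [hX]; exact hx⟩
    · exact mem_union_right _ (by simpa using hX)
  refine (card_le_card hsub).trans ((card_union_le _ _).trans ?_)
  exact Nat.add_le_add_right (card_union_le _ _) _

theorem qCount_le_qCount_add {N d : ℕ} (Y Z : Fin N → Pt d) (k : ℕ) (r : ℝ) :
    qCount Y k r ≤
      qCount Z k r + (univ.filter fun i => deg Y r i < k ∧ k ≤ deg Z r i).card := by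
  refine (card_le_card ?_).trans (card_union_le _ _)
  intro i hi
  simp only [mem_union, mem_filter, mem_univ, true_and] at hi ⊢
  omega

theorem max_Ct_le_sSup {N d : ℕ} (X : Fin N → Pt d) (k t : ℕ) (r : ℝ) (x : Pt d) :
    max (Ct X x (k : ℤ) t r) (Ct X x ((k : ℤ) - 1) t r) ≤
      sSup {n : ℕ | ∃ x : Pt d,
        n = max (Ct X x (k : ℤ) t r) (Ct X x ((k : ℤ) - 1) t r)} := by
  refine le_csSup ⟨N, ?_⟩ ⟨x, rfl⟩
  rintro _ ⟨y, rfl⟩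
  have hN (s : Finset (Fin N)) : s.card ≤ N := by simpa using card_le_univ s
  exact max_le (hN _) (hN _)

/-- Upper bound on the `t`-step local sensitivity `LS^{(t)}` of the outlier-count query:
if `H(X,X_t) = t` and `H(X_t,X_t') = 1`, then the change in the outlier count is at most
`sup_{x ∈ ℝ^d} max( C^{(t)}(X,x,k,r), C^{(t)}(X,x,k−1,r) ) + t + 1`. -/
theorem local_sensitivity_t_upper_bound
    (d N k t : ℕ) (hd : 1 ≤ d) (hk : 1 ≤ k) (r : ℝ) (hr : 0 < r)
    (X Xt Xt' : Fin N → Pt d) (hH : hamming X Xt = t) (hH' : hamming Xt Xt' = 1) :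
    |(qCount Xt k r : ℤ) - (qCount Xt' k r : ℤ)| ≤
      ((sSup {n : ℕ | ∃ x : Pt d,
        n = max (Ct X x (k : ℤ) t r) (Ct X x ((k : ℤ) - 1) t r)} : ℕ) : ℤ) + t + 1 := by
  obtain ⟨x, hx⟩ := exists_center_of_hamming_eq_one k r hH'
  obtain ⟨y, hy⟩ := exists_center_of_hamming_eq_one (Y := Xt') (Z := Xt) k r
    ((hamming_comm _ _).trans hH')
  have hE : (univ.filter fun i => Xt i ≠ Xt' i).card = 1 := hH'
  have h₁ := qCount_le_qCount_add Xt Xt' k r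
  have h₂ := qCount_le_qCount_add Xt' Xt k r
  have hC₁ := card_le_Ct_add (X := X) (W := Xt) (r := r) (x := x) (m := (k : ℤ) - 1)
    (S := univ.filter fun i => deg Xt r i < k ∧ k ≤ deg Xt' r i)
    (E := univ.filter fun i => Xt i ≠ Xt' i) (by
      intro i hi hiE
      simp only [mem_filter, mem_univ, true_and, not_not] at hi hiE
      obtain ⟨hm, -, hr'⟩ := hx i hiE hi.1 hi.2
      exact ⟨hm, by rw [hiE]; exact hr'⟩)
  have hC₂ := card_le_Ct_add (X := X) (W := Xt) (r := r) (x := y) (m := (k : ℤ))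
    (S := univ.filter fun i => deg Xt' r i < k ∧ k ≤ deg Xt r i)
    (E := univ.filter fun i => Xt i ≠ Xt' i) (by
      intro i hi hiE
      simp only [mem_filter, mem_univ, true_and, not_not] at hi hiE
      exact (hy i hiE.symm hi.1 hi.2).2)
  rw [hH, hE] at hC₁ hC₂
  have hs₁ := (le_max_right _ _).trans (max_Ct_le_sSup X k t r x)
  have hs₂ := (le_max_left _ _).trans (max_Ct_le_sSup X k t r y)
  rw [abs_le]
  constructor <;> omega
end
end

section
/- Define the utility function u(X,S) = q_count(X,k,r,S) / min(N, k·K_{|S|} + 1) for a nonempty subspace S ⊆ {1,…,d}, where K_c is the kissing number of ℝ^c. Then the sensitivity of u is at most 1: for every nonempty S ⊆ {1,…,d} and all databases X, X' of size N in ℝ^d with H(X,X') = 1, |u(X,S) − u(X',S)| ≤ 1. -/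
open Finset
open scoped Classical

noncomputable section

/-- The subspace distance `dist_S(x,y) = sqrt( (∑_{i∈S} (x_i − y_i)²) / |S| )`. -/
def sdist {d : ℕ} (S : Finset (Fin d)) (x y : Pt d) : ℝ :=
  Real.sqrt ((∑ i ∈ S, (x i - y i) ^ 2) / S.card)

/-- The degree of record `i` in `X` in subspace `S`: the number of other records within
subspace distance `r`. -/
def sdeg {N d : ℕ} (S : Finset (Fin d)) (X : Fin N → Pt d) (r : ℝ) (i : Fin N) : ℕ :=
  (univ.filter fun j => j ≠ i ∧ sdist S (X j) (X i) ≤ r).card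

/-- `q_count(X,k,r,S)`: the number of outlier records in subspace `S`. -/
def qCountS {N d : ℕ} (X : Fin N → Pt d) (k : ℕ) (r : ℝ) (S : Finset (Fin d)) : ℕ :=
  (univ.filter fun i => sdeg S X r i < k).card

/-- `K` is the kissing number of `ℝ^c`: the largest `n` for which there exist `n` unit
vectors with pairwise distances at least `1`. -/
def IsKissingNumber (c K : ℕ) : Prop :=
  IsGreatest {n : ℕ | ∃ y : Fin n → Pt c,
    (∀ i, ‖y i‖ = 1) ∧ ∀ i j, i ≠ j → 1 ≤ ‖y i - y j‖} K

/-- The utility function `u(X,S) = q_count(X,k,r,S) / min(N, k·K_c + 1)` for the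
exponential mechanism, where `K_c` is the kissing number of `ℝ^{|S|}`. -/
def uSubspace {N d : ℕ} (k : ℕ) (r : ℝ) (Kc : ℕ) (X : Fin N → Pt d)
    (S : Finset (Fin d)) : ℝ :=
  (qCountS X k r S : ℝ) / ((min N (k * Kc + 1) : ℕ) : ℝ)

/-- A finite set in which every closed neighbourhood has at most `k` elements contains an
independent set of at least a `1 / k` fraction of its size. -/
lemma exists_independent_card_le_mul {ι : Type*} (R : ι → ι → Prop) (hrefl : ∀ a, R a a)
    (hsymm : ∀ a b, R a b → R b a) (A : Finset ι) (k : ℕ)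
    (hA : ∀ a ∈ A, (A.filter fun b => R a b).card ≤ k) :
    ∃ I ⊆ A, (∀ a ∈ I, ∀ b ∈ I, a ≠ b → ¬ R a b) ∧ A.card ≤ I.card * k := by
  obtain ⟨I, hI, hmax⟩ := Finset.exists_max_image
    (A.powerset.filter fun I => ∀ a ∈ I, ∀ b ∈ I, a ≠ b → ¬ R a b) Finset.card
    ⟨∅, by simp⟩
  simp only [Finset.mem_filter, Finset.mem_powerset] at hI hmax
  obtain ⟨hIA, hind⟩ := hI
  refine ⟨I, hIA, hind, ?_⟩
  have hcover : A ⊆ I.biUnion fun a => A.filter fun b => R a b := by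
    intro b hb
    simp only [Finset.mem_biUnion, Finset.mem_filter]
    by_contra! hno
    have hbI : b ∉ I := fun h => hno b h hb (hrefl b)
    have hle := hmax (insert b I) ⟨Finset.insert_subset hb hIA, by
      intro x hx y hy hxy hR
      rcases Finset.mem_insert.1 hx with rfl | hx' <;>
        rcases Finset.mem_insert.1 hy with rfl | hy'
      · exact hxy rfl
      · exact hno y hy' hb (hsymm _ _ hR)
      · exact hno x hx' hb hR
      · exact hind x hx' y hy' hxy hR⟩
    rw [Finset.card_insert_of_notMem hbI] at hle
    omega
  exact (Finset.card_le_card hcover).trans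
    (Finset.card_biUnion_le_card_mul _ _ _ fun a ha => hA a (hIA ha))

/-- Two vectors of a ball of radius `r` more than `r` apart have normalizations at distance
at least `1`. -/
lemma one_le_norm_normalize_sub {E : Type*} [NormedAddCommGroup E] [InnerProductSpace ℝ E]
    {u v : E} {r : ℝ} (hu : ‖u‖ ≤ r) (hv : ‖v‖ ≤ r) (hu0 : u ≠ 0) (hv0 : v ≠ 0)
    (huv : r < ‖u - v‖) : 1 ≤ ‖(‖u‖⁻¹ • u) - (‖v‖⁻¹ • v)‖ := by
  have ha : 0 < ‖u‖ := norm_pos_iff.2 hu0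
  have hb : 0 < ‖v‖ := norm_pos_iff.2 hv0
  have hsub := norm_sub_sq_real u v
  have hr2 : r ^ 2 < ‖u - v‖ ^ 2 := pow_lt_pow_left₀ huv (ha.le.trans hu) two_ne_zero
  have hinner : 2 * inner ℝ u v ≤ ‖u‖ * ‖v‖ := by
    rcases le_total ‖u‖ ‖v‖ with h | h <;> nlinarith
  have hsq : ‖(‖u‖⁻¹ • u) - (‖v‖⁻¹ • v)‖ ^ 2 = 2 - 2 * inner ℝ u v / (‖u‖ * ‖v‖) := by
    rw [norm_sub_sq_real, show ‖‖u‖⁻¹ • u‖ = 1 from norm_smul_inv_norm (𝕜 := ℝ) hu0,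
      show ‖‖v‖⁻¹ • v‖ = 1 from norm_smul_inv_norm (𝕜 := ℝ) hv0,
      real_inner_smul_left, real_inner_smul_right]
    field_simp
    ring
  have hdiv : 2 * inner ℝ u v / (‖u‖ * ‖v‖) ≤ 1 := (div_le_one (mul_pos ha hb)).2 hinner
  nlinarith [norm_nonneg ((‖u‖⁻¹ • u) - (‖v‖⁻¹ • v))]

/-- The kissing number is positive in positive dimension. -/
lemma IsKissingNumber.one_le {c K : ℕ} (hc : 1 ≤ c) (hK : IsKissingNumber c K) : 1 ≤ K :=
  hK.2 ⟨fun _ => EuclideanSpace.single ⟨0, hc⟩ 1, by simp,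
    fun i j hij => (hij (Subsingleton.elim i j)).elim⟩

/-- A family of points of a ball of radius `r` that are pairwise more than `r` apart has at
most as many members as the kissing number. -/
lemma IsKissingNumber.card_le_of_separated {c K : ℕ} (hc : 1 ≤ c) (hK : IsKissingNumber c K)
    {ι : Type*} (I : Finset ι) (f : ι → Pt c) {r : ℝ} (hf : ∀ i ∈ I, ‖f i‖ ≤ r)
    (hsep : ∀ i ∈ I, ∀ j ∈ I, i ≠ j → r < ‖f i - f j‖) : I.card ≤ K := by
  rcases le_or_gt I.card 1 with h1 | h1
  · exact h1.trans (hK.one_le hc)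
  have hne : ∀ i ∈ I, f i ≠ 0 := by
    intro i hi h0
    obtain ⟨j, hj, hji⟩ := Finset.exists_mem_ne h1 i
    have := hsep j hj i hi hji
    rw [h0, sub_zero] at this
    exact absurd (hf j hj) (not_le.2 this)
  refine hK.2 ⟨fun m => ‖f (I.equivFin.symm m)‖⁻¹ • f (I.equivFin.symm m), fun m => ?_,
    fun m n hmn => ?_⟩
  · exact norm_smul_inv_norm (𝕜 := ℝ) (hne _ (I.equivFin.symm m).2)
  · have hm := (I.equivFin.symm m).2
    have hn := (I.equivFin.symm n).2
    exact one_le_norm_normalize_sub (hf _ hm) (hf _ hn) (hne _ hm) (hne _ hn)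
      (hsep _ hm _ hn fun h => hmn (I.equivFin.symm.injective (Subtype.ext h)))

/-- The projection to the coordinates in `S`, scaled so that it carries the subspace distance
to the Euclidean one. -/
def subspaceProj {d : ℕ} (S : Finset (Fin d)) (x : Pt d) : Pt S.card :=
  WithLp.toLp 2 fun m => x (S.equivFin.symm m) / Real.sqrt S.card

lemma sdist_eq_norm_subspaceProj_sub {d : ℕ} (S : Finset (Fin d)) (x y : Pt d) :
    sdist S x y = ‖subspaceProj S x - subspaceProj S y‖ := by
  rw [sdist, EuclideanSpace.norm_eq]
  congr 1
  simp only [subspaceProj, PiLp.sub_apply, Real.norm_eq_abs, sq_abs, ← sub_div, div_pow,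
    Real.sq_sqrt (Nat.cast_nonneg S.card)]
  rw [← Finset.sum_div, ← Finset.sum_coe_sort S]
  congr 1
  exact (Equiv.sum_comp S.equivFin.symm fun i : S => (x i - y i) ^ 2).symm

lemma sdist_comm {d : ℕ} (S : Finset (Fin d)) (x y : Pt d) : sdist S x y = sdist S y x := by
  simp only [sdist_eq_norm_subspaceProj_sub, norm_sub_rev]

lemma sdist_self {d : ℕ} (S : Finset (Fin d)) (x : Pt d) : sdist S x x = 0 := by
  simp [sdist]

/-- At most `K * k` outliers lie within subspace distance `r` of a given point. -/
lemma card_outliers_near_le {N d k K : ℕ} {r : ℝ} (hr : 0 < r) {S : Finset (Fin d)}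
    (hS : S.Nonempty) (hK : IsKissingNumber S.card K) (X : Fin N → Pt d) (p : Pt d) :
    (univ.filter fun j => sdeg S X r j < k ∧ sdist S (X j) p ≤ r).card ≤ K * k := by
  obtain ⟨I, hIA, hind, hcard⟩ := exists_independent_card_le_mul
    (fun a b => sdist S (X b) (X a) ≤ r) (fun a => by simp [sdist_self, hr.le])
    (fun a b h => by rwa [sdist_comm])
    (univ.filter fun j => sdeg S X r j < k ∧ sdist S (X j) p ≤ r) k (by
      intro a ha
      have hdeg : sdeg S X r a < k := (Finset.mem_filter.1 ha).2.1
      refine (Finset.card_le_card (t := insert a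
        (univ.filter fun j => j ≠ a ∧ sdist S (X j) (X a) ≤ r)) fun b hb => ?_).trans
        ((Finset.card_insert_le _ _).trans hdeg)
      have hR := (Finset.mem_filter.1 hb).2
      by_cases hba : b = a <;> simp [hba, hR])
  refine hcard.trans (Nat.mul_le_mul_right k ?_)
  refine hK.card_le_of_separated hS.card_pos I
    (fun j => subspaceProj S (X j) - subspaceProj S p) (r := r) (fun i hi => ?_)
    fun i hi j hj hij => ?_
  · rw [← sdist_eq_norm_subspaceProj_sub]
    exact (Finset.mem_filter.1 (hIA hi)).2.2
  · rw [sub_sub_sub_cancel_right, ← sdist_eq_norm_subspaceProj_sub]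
    exact not_le.1 (hind j hj i hi hij.symm)

/-- Changing a single record decreases the number of outliers by at most `k * K + 1`. -/
lemma qCountS_le_add {N d k K : ℕ} {r : ℝ} (hr : 0 < r) {S : Finset (Fin d)}
    (hS : S.Nonempty) (hK : IsKissingNumber S.card K) {X X' : Fin N → Pt d} (i₀ : Fin N)
    (hX : ∀ j, j ≠ i₀ → X j = X' j) :
    qCountS X k r S ≤ qCountS X' k r S + (k * K + 1) := by
  have hsub : (univ.filter fun i => sdeg S X r i < k) ⊆
      (univ.filter fun i => sdeg S X' r i < k) ∪
        insert i₀ (univ.filter fun j => sdeg S X r j < k ∧ sdist S (X j) (X' i₀) ≤ r) := by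
    intro j hj
    have hdeg : sdeg S X r j < k := (Finset.mem_filter.1 hj).2
    by_cases hj0 : j = i₀
    · simp [hj0]
    by_cases hnear : sdist S (X j) (X' i₀) ≤ r
    · simp [hdeg, hnear]
    refine Finset.mem_union_left _ (Finset.mem_filter.2 ⟨mem_univ j, lt_of_le_of_lt ?_ hdeg⟩)
    refine Finset.card_le_card fun l hl => ?_
    obtain ⟨hlj, hl⟩ := (Finset.mem_filter.1 hl).2
    rw [← hX j hj0] at hl
    have hl0 : l ≠ i₀ := by
      rintro rfl
      exact hnear (by rwa [sdist_comm])
    rw [← hX l hl0] at hl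
    exact Finset.mem_filter.2 ⟨mem_univ l, hlj, hl⟩
  have hnear := card_outliers_near_le (k := k) hr hS hK X (X' i₀)
  refine (Finset.card_le_card hsub).trans ((Finset.card_union_le _ _).trans ?_)
  refine Nat.add_le_add_left ((Finset.card_insert_le _ _).trans ?_) _
  rw [mul_comm k K]
  exact Nat.add_le_add_right hnear 1

lemma qCountS_le_size {N d : ℕ} (X : Fin N → Pt d) (k : ℕ) (r : ℝ) (S : Finset (Fin d)) :
    qCountS X k r S ≤ N :=
  (Finset.card_le_univ _).trans_eq (Fintype.card_fin N)

/-- The utility function `u_subspace` has sensitivity at most `1`: for every nonempty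
subspace `S` and every pair of neighboring databases, `|u(X,S) − u(X',S)| ≤ 1`. -/
theorem uSubspace_sensitivity_le_one
    (d N k : ℕ) (hd : 1 ≤ d) (hk : 1 ≤ k) (r : ℝ) (hr : 0 < r)
    (K : ℕ → ℕ) (hK : ∀ c, 1 ≤ c → IsKissingNumber c (K c))
    (S : Finset (Fin d)) (hS : S.Nonempty)
    (X X' : Fin N → Pt d) (hH : hamming X X' = 1) :
    |uSubspace k r (K S.card) X S - uSubspace k r (K S.card) X' S| ≤ 1 := by
  obtain ⟨i₀, hi₀⟩ := Finset.card_eq_one.1 hH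
  have hX : ∀ j, j ≠ i₀ → X j = X' j := by
    intro j hj
    by_contra hne
    have hmem : j ∈ univ.filter fun i => X i ≠ X' i := Finset.mem_filter.2 ⟨mem_univ j, hne⟩
    rw [hi₀, Finset.mem_singleton] at hmem
    exact hj hmem
  have hKS := hK S.card hS.card_pos
  have h := qCountS_le_add (k := k) hr hS hKS i₀ hX
  have h' := qCountS_le_add (k := k) hr hS hKS i₀ fun j hj => (hX j hj).symm
  have hN := qCountS_le_size X k r S
  have hN' := qCountS_le_size X' k r S
  have hle : qCountS X k r S ≤ qCountS X' k r S + min N (k * K S.card + 1) := by omega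
  have hle' : qCountS X' k r S ≤ qCountS X k r S + min N (k * K S.card + 1) := by omega
  unfold uSubspace
  generalize min N (k * K S.card + 1) = M at hle hle'
  rw [← sub_div, abs_div, Nat.abs_cast]
  refine div_le_one_of_le₀ (abs_sub_le_iff.2 ⟨?_, ?_⟩) (Nat.cast_nonneg M)
  · rw [sub_le_iff_le_add']
    exact_mod_cast hle
  · rw [sub_le_iff_le_add']
    exact_mod_cast hle'
end
end
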